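/- arXiv:0810.0118 — 3 statements merged into one kernel-verified Lean document; each statement's English description precedes it below -/
import Mathlib

section
/- Let n be a natural number and let M be an abelian group equipped with an action of the free abelian group ℤⁿ by group automorphisms. Then the n-th group cohomology Hⁿ(ℤⁿ, M) is isomorphic, as an abelian group, to the coinvariants M_{ℤⁿ}. -/
namespace TopDeg

open CategoryTheory

/-- The group `ℤⁿ` written multiplicatively. -/
abbrev Gr (n : ℕ) : Type := Multiplicative (Fin n → ℤ)

section Basic

variable {k : Type} [CommRing k] {n : ℕ} {M : Type} [AddCommGroup M] [Module k M]

/-- Discrete antiderivative of a function on `ℤ`. -/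
def antider (u : ℤ → M) : ℤ → M
  | Int.ofNat m => ∑ i ∈ Finset.range m, u i
  | Int.negSucc m => - ∑ i ∈ Finset.range (m + 1), u (-(i + 1 : ℤ))

lemma antider_succ (u : ℤ → M) (m : ℤ) : antider u (m + 1) - antider u m = u m := by
  cases m with
  | ofNat m =>
    change antider u (Int.ofNat (m + 1)) - _ = _
    simp [antider, Finset.sum_range_succ]
  | negSucc m =>
    cases m with
    | zero => 
      change antider u (Int.ofNat 0) - _ = _
      simp [antider]
    | succ m =>
      have : Int.negSucc (m + 1) + 1 = Int.negSucc m := by omega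
      rw [this]
      simp only [antider]
      rw [Finset.sum_range_succ _ (m + 1)]
      have : Int.negSucc (m + 1) = -(((m + 1 : ℕ) : ℤ) + 1) := by omega
      rw [this]
      abel

variable (k n M) in
/-- Functions on `ℤⁿ` which depend only on the first `j` coordinates. -/
def F (j : ℕ) : Submodule k ((Fin n → ℤ) → M) where
  carrier := {f | ∀ x y, (∀ i : Fin n, i.val < j → x i = y i) → f x = f y}
  add_mem' := by
    intro a b ha hb x y h
    simp only [Pi.add_apply, ha x y h, hb x y h]
  zero_mem' := by intro x y h; rfl
  smul_mem' := by
    intro c a ha x y h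
    simp only [Pi.smul_apply, ha x y h]

/-- The diagonal action of `ℤⁿ` on `F j`. -/
def act (ρ : Representation k (Gr n) M) (j : ℕ) : Representation k (Gr n) (F k n M j) where
  toFun g :=
    { toFun := fun f => ⟨fun x => ρ g (f.1 (x + g.toAdd)), fun x y h => by
        beta_reduce
        rw [f.2 (x + g.toAdd) (y + g.toAdd)]
        intro i hi
        simp [h i hi]⟩
      map_add' := by intro a b; ext x; simp
      map_smul' := by intro a b; ext x; simp }
  map_one' := by ext f x; simp
  map_mul' := by
    intro g h; ext f x
    simp [add_assoc]

lemma act_apply (ρ : Representation k (Gr n) M) (j : ℕ) (g : Gr n) (f : F k n M j) (x) :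
    (act ρ j g f).1 x = ρ g (f.1 (x + g.toAdd)) := rfl

/-- `F j` as an object of `Rep`. -/
noncomputable abbrev FR (ρ : Representation k (Gr n) M) (j : ℕ) : Rep k (Gr n) := Rep.of (act ρ j)

/-- The shift operator in the direction `i`. -/
def shift (ρ : Representation k (Gr n) M) (j : ℕ) (i : Fin n) :
    (act ρ j).IntertwiningMap (act ρ j) where
  toFun f := ⟨fun x => f.1 (x + Pi.single i 1), fun x y h => by
        beta_reduce
        rw [f.2 (x + Pi.single i 1) (y + Pi.single i 1)]
        intro i hi
        simp [h i hi]⟩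
  map_add' := by intro a b; ext x; simp
  map_smul' := by intro a b; ext x; simp
  isIntertwining' := by
    intro g; ext f x
    simp [act_apply, add_right_comm]

lemma shift_apply (ρ : Representation k (Gr n) M) (j : ℕ) (i : Fin n) (f : F k n M j) (x) :
    (shift ρ j i f).1 x = f.1 (x + Pi.single i 1) := rfl

/-- Inclusion of `F j` in `F (j+1)`. -/
def incl (ρ : Representation k (Gr n) M) (j : ℕ) :
    (act ρ j).IntertwiningMap (act ρ (j + 1)) where
  toFun f := ⟨f.1, fun x y h => f.2 x y fun i hi => h i (by omega)⟩
  map_add' := by intro a b; ext x; simp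
  map_smul' := by intro a b; ext x; simp
  isIntertwining' := by intro g; ext f x; rfl

lemma incl_apply (ρ : Representation k (Gr n) M) (j : ℕ) (f : F k n M j) (x) :
    (incl ρ j f).1 x = f.1 x := rfl

noncomputable abbrev T (ρ : Representation k (Gr n) M) (j : ℕ) (i : Fin n) : FR ρ j ⟶ FR ρ j :=
  Rep.ofHom (shift ρ j i)

noncomputable abbrev D (ρ : Representation k (Gr n) M) (j : ℕ) (i : Fin n) : FR ρ j ⟶ FR ρ j :=
  T ρ j i - 𝟙 _

lemma D_apply (ρ : Representation k (Gr n) M) (j : ℕ) (i : Fin n) (f : F k n M j) (x) :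
    ((D ρ j i).hom f).1 x = f.1 (x + Pi.single i 1) - f.1 x := rfl

lemma D_surj (ρ : Representation k (Gr n) M) (j : Fin n) :
    Function.Surjective (D ρ (j.val + 1) j).hom := by
  intro h
  refine ⟨⟨fun x => antider (fun m => h.1 (Function.update x j m)) (x j), ?_⟩, ?_⟩
  · intro x y hxy
    beta_reduce
    rw [hxy j (by omega)]
    congr 1
    funext m
    apply h.2
    intro i hi
    by_cases hij : i = j
    · subst hij; simp
    · simp [hij, hxy i hi]
  · apply Subtype.ext
    funext x
    rw [D_apply]
    have h1 : ∀ m, Function.update (x + Pi.single j 1) j m = Function.update x j m := by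
      intro m
      funext i
      by_cases hij : i = j
      · subst hij; simp
      · simp [hij]
    simp only [h1, Pi.add_apply, Pi.single_eq_same]
    rw [antider_succ]
    simp

lemma D_ker (ρ : Representation k (Gr n) M) (j : Fin n) (f : F k n M (j.val + 1))
    (hf : (D ρ (j.val + 1) j).hom f = 0) : ∃ f' : F k n M j.val, incl ρ j f' = f := by
  have h1 : ∀ x, f.1 (x + Pi.single j 1) = f.1 x := by
    intro x
    have := D_apply ρ _ j f x
    rw [hf] at this
    exact (sub_eq_zero.1 this.symm)
  have h2 : ∀ (m : ℤ) x, f.1 (x + Pi.single j m) = f.1 x := by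
    intro m
    induction m using Int.induction_on with
    | zero => simp
    | succ m ih =>
      intro x
      rw [Pi.single_add, ← add_assoc, h1, ih]
    | pred m ih =>
      intro x
      rw [← h1, add_assoc, ← Pi.single_add, sub_add_cancel, ih]
  refine ⟨⟨f.1, ?_⟩, Subtype.ext rfl⟩
  intro x y hxy
  rw [← h2 (y j - x j) x]
  apply f.2
  intro i hi
  by_cases hij : i = j
  · subst hij; simp
  · have : i.val ≠ j.val := fun h => hij (Fin.ext h)
    simp [hij, hxy i (by omega)]

/-- The basic short complex. -/
noncomputable abbrev SC (ρ : Representation k (Gr n) M) (j : Fin n) :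
    ShortComplex (Rep k (Gr n)) where
  X₁ := FR ρ j.val
  X₂ := FR ρ (j.val + 1)
  X₃ := FR ρ (j.val + 1)
  f := Rep.ofHom (incl ρ j.val)
  g := D ρ (j.val + 1) j
  zero := by
    ext f x
    change f.1 (x + Pi.single j 1) - f.1 x = 0
    rw [sub_eq_zero]
    apply f.2
    intro i hi
    have : i ≠ j := by rintro rfl; omega
    simp [this]

lemma SC_exact (ρ : Representation k (Gr n) M) (j : Fin n) : (SC ρ j).ShortExact where
  exact := by
    rw [← ShortComplex.exact_map_iff_of_faithful _ (forget₂ (Rep k (Gr n)) (ModuleCat k)),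
      ShortComplex.moduleCat_exact_iff]
    intro f hf
    exact D_ker ρ j f hf
  mono_f := by
    rw [Rep.mono_iff_injective]
    intro a b h
    have h' := congrArg (fun z : F k n M (j.val + 1) => z.1) h
    exact Subtype.ext h'
  epi_g := by
    rw [Rep.epi_iff_surjective]
    exact D_surj ρ j

/-- Shift as endomorphism of the short complex. -/
noncomputable def SCshift (ρ : Representation k (Gr n) M) (j i : Fin n) : SC ρ j ⟶ SC ρ j where
  τ₁ := T ρ _ i
  τ₂ := T ρ _ i
  τ₃ := T ρ _ i
  comm₁₂ := rfl
  comm₂₃ := by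
    have : T ρ (j.val + 1) i ≫ T ρ (j.val + 1) j = T ρ (j.val + 1) j ≫ T ρ (j.val + 1) i := by
      ext f x
      change f.1 (x + _ + _) = f.1 (x + _ + _)
      rw [add_right_comm]
    simp [D, this]

/-- `F n` is coinduced from the trivial subgroup. -/
noncomputable def coindEquiv (ρ : Representation k (Gr n) M) :
    FR ρ n ≅ Rep.coind (⊥ : Subgroup (Gr n)).subtype (Rep.trivial k (⊥ : Subgroup (Gr n)) M) :=
  Rep.mkIso <| .mk
    { toFun := fun f => ⟨fun x => ρ x (f.1 x.toAdd), by
        rintro ⟨g, hg⟩ h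
        obtain rfl := Subgroup.mem_bot.1 hg
        simp⟩
      invFun := fun f => ⟨fun x => ρ (Multiplicative.ofAdd x)⁻¹ (f.1 (Multiplicative.ofAdd x)), by
        intro x y h
        have : x = y := funext fun i => h i i.2
        rw [this]⟩
      map_add' := by intro a b; apply Subtype.ext; funext x; simp
      map_smul' := by intro a b; apply Subtype.ext; funext x; simp
      left_inv := by intro f; apply Subtype.ext; funext x; simp
      right_inv := by intro f; apply Subtype.ext; funext x; simp } (by
    intro g
    ext f x
    change ρ x (ρ g (f.1 (x.toAdd + g.toAdd))) = ρ (x * g) (f.1 (x * g).toAdd)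
    rw [map_mul]; rfl)

lemma isZero_top (ρ : Representation k (Gr n) M) (m : ℕ) :
    Limits.IsZero (groupCohomology (FR ρ n) (m + 1)) := by
  refine (isZero_groupCohomology_succ_of_subsingleton
    (Rep.trivial k (⊥ : Subgroup (Gr n)) M) m).of_iso ?_
  exact (groupCohomology.functor k (Gr n) (m + 1)).mapIso (coindEquiv ρ) ≪≫
    groupCohomology.coindIso _ _


/-- The generators of `ℤⁿ`. -/
def gen (i : Fin n) : Gr n := Multiplicative.ofAdd (Pi.single i 1)

/-- The subgroup killed in passing to the coinvariants of the last generators. -/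
def K (ρ : Representation k (Gr n) M) (j : ℕ) : AddSubgroup M :=
  AddSubgroup.closure {x | ∃ i : Fin n, j ≤ i.val ∧ ∃ m : M, x = m - ρ (gen i)⁻¹ m}

/-- The inductive statement. -/
def Good (ρ : Representation k (Gr n) M) (j d : ℕ) : Prop :=
  (∀ e, Limits.IsZero (groupCohomology (FR ρ j) (d + e + 1))) ∧
  ∃ π : M →+ groupCohomology (FR ρ j) d, Function.Surjective π ∧ π.ker = K ρ j ∧
    ∀ (i : Fin n) (m : M), π (ρ (gen i)⁻¹ m) =
      (groupCohomology.map (A := FR ρ j) (B := FR ρ j) (MonoidHom.id (Gr n)) (T ρ j i) d).hom (π m)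

/-- The invariant function attached to `m`. -/
def invFn (ρ : Representation k (Gr n) M) : M →ₗ[k] (FR ρ n).ρ.invariants where
  toFun m := ⟨⟨fun x => ρ (Multiplicative.ofAdd x)⁻¹ m, fun x y h => by
        have : x = y := funext fun i => h i i.2
        rw [this]⟩, fun g => by
      apply Subtype.ext
      funext x
      change ρ g (ρ (Multiplicative.ofAdd (x + g.toAdd))⁻¹ m) = ρ (Multiplicative.ofAdd x)⁻¹ m
      rw [← Module.End.mul_apply, ← map_mul, ofAdd_add, ofAdd_toAdd]
      congr 2
      simp⟩
  map_add' a b := by apply Subtype.ext; apply Subtype.ext; funext x; simp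
  map_smul' a b := by apply Subtype.ext; apply Subtype.ext; funext x; simp

lemma invFn_apply (ρ : Representation k (Gr n) M) (m : M) (x) :
    (invFn ρ m).1.1 x = ρ (Multiplicative.ofAdd x)⁻¹ m := rfl

lemma good_top (ρ : Representation k (Gr n) M) : Good ρ n 0 := by
  refine ⟨fun e => isZero_top ρ _, ?_⟩
  refine ⟨((groupCohomology.H0Iso (FR ρ n)).inv.hom ∘ₗ invFn ρ).toAddMonoidHom, ?_, ?_, ?_⟩
  · intro y
    refine groupCohomology.H0_induction_on (FR ρ n) y ?_
    intro f
    refine ⟨f.1.1 0, ?_⟩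
    change (groupCohomology.H0Iso (FR ρ n)).inv.hom (invFn ρ (f.1.1 0)) = _
    congr 1
    apply Subtype.ext
    apply Subtype.ext
    funext x
    rw [invFn_apply]
    have h := f.2 (Multiplicative.ofAdd x)
    have h2 : ρ (Multiplicative.ofAdd x) (f.1.1 (0 + x)) = f.1.1 0 :=
      congrArg (fun z : F k n M n => z.1 0) h
    rw [← h2, zero_add]
    simp
  · have hK : K ρ n = ⊥ := by
      rw [K, AddSubgroup.closure_eq_bot_iff]
      rintro x ⟨i, hi, _⟩
      have := i.2
      omega
    rw [hK, AddMonoidHom.ker_eq_bot_iff]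
    intro a b h
    have h1 : (groupCohomology.H0Iso (FR ρ n)).inv.hom (invFn ρ a) =
      (groupCohomology.H0Iso (FR ρ n)).inv.hom (invFn ρ b) := h
    have h2 : invFn ρ a = invFn ρ b := by
      have := congrArg (groupCohomology.H0Iso (FR ρ n)).hom.hom h1
      simpa using this
    have h3 := congrArg (fun z => z.1.1 0) h2
    change ρ (Multiplicative.ofAdd 0)⁻¹ a = ρ (Multiplicative.ofAdd 0)⁻¹ b at h3
    simpa using h3
  · intro i m
    change (groupCohomology.H0Iso (FR ρ n)).inv.hom (invFn ρ _) =
      (groupCohomology.map (A := FR ρ n) (B := FR ρ n) (MonoidHom.id (Gr n)) (T ρ n i) 0).hom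
        ((groupCohomology.H0Iso (FR ρ n)).inv.hom (invFn ρ _))
    have key := groupCohomology.map_id_comp_H0Iso_hom (T ρ n i)
    rw [← Iso.eq_comp_inv, Category.assoc] at key
    rw [key]
    simp only [ModuleCat.hom_comp, LinearMap.comp_apply]
    congr 1
    have hid : (groupCohomology.H0Iso (FR ρ n)).hom.hom
        ((groupCohomology.H0Iso (FR ρ n)).inv.hom (invFn ρ m)) = invFn ρ m :=
      LinearMap.congr_fun
        (congrArg ModuleCat.Hom.hom (groupCohomology.H0Iso (FR ρ n)).inv_hom_id) (invFn ρ m)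
    rw [hid]
    apply Subtype.ext
    apply Subtype.ext
    funext x
    change ρ (Multiplicative.ofAdd x)⁻¹ (ρ (gen i)⁻¹ m) = 
      ρ (Multiplicative.ofAdd (x + Pi.single i 1))⁻¹ m
    rw [← Module.End.mul_apply, ← map_mul, ofAdd_add, mul_inv]
    rfl

lemma K_succ (ρ : Representation k (Gr n) M) (j : Fin n) (m : M) :
    m ∈ K ρ j.val ↔ ∃ m', m - (ρ (gen j)⁻¹ m' - m') ∈ K ρ (j.val + 1) := by
  constructor
  · intro h
    induction h using AddSubgroup.closure_induction with
    | mem x hx =>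
      obtain ⟨i, hi, m, rfl⟩ := hx
      by_cases hij : i = j
      · subst hij
        refine ⟨-m, ?_⟩
        simp only [map_neg]
        convert (K ρ (i.val + 1)).zero_mem using 1
        abel
      · have : i.val ≠ j.val := fun h => hij (Fin.ext h)
        refine ⟨0, AddSubgroup.subset_closure ⟨i, by omega, m, by simp⟩⟩
    | zero => exact ⟨0, by simp⟩
    | add x y _ _ hx hy =>
      obtain ⟨a, ha⟩ := hx
      obtain ⟨b, hb⟩ := hy
      refine ⟨a + b, ?_⟩
      convert add_mem ha hb using 1
      rw [map_add]
      abel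
    | neg x _ hx =>
      obtain ⟨a, ha⟩ := hx
      refine ⟨-a, ?_⟩
      convert neg_mem ha using 1
      rw [map_neg]
      abel
  · rintro ⟨m', h⟩
    have h1 : K ρ (j.val + 1) ≤ K ρ j.val := by
      apply AddSubgroup.closure_mono
      rintro x ⟨i, hi, m, rfl⟩
      exact ⟨i, by omega, m, rfl⟩
    have h2 : m' - ρ (gen j)⁻¹ m' ∈ K ρ j.val :=
      AddSubgroup.subset_closure ⟨j, le_rfl, m', rfl⟩
    convert sub_mem (h1 h) h2 using 1
    abel

lemma map_D (ρ : Representation k (Gr n) M) (j d : ℕ) (i : Fin n) :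
    groupCohomology.map (A := FR ρ j) (B := FR ρ j) (MonoidHom.id (Gr n)) (D ρ j i) d =
      groupCohomology.map (A := FR ρ j) (B := FR ρ j) (MonoidHom.id (Gr n)) (T ρ j i) d - 𝟙 _ := by
  have : groupCohomology.cochainsMap (A := FR ρ j) (B := FR ρ j) (MonoidHom.id (Gr n)) (D ρ j i) =
      groupCohomology.cochainsMap (A := FR ρ j) (B := FR ρ j) (MonoidHom.id (Gr n)) (T ρ j i) - 𝟙 _ := by
    change (groupCohomology.cochainsFunctor k (Gr n)).map _ = _
    rw [D, Functor.map_sub]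
    rfl
  rw [groupCohomology.map, this, HomologicalComplex.homologyMap_sub,
    HomologicalComplex.homologyMap_id]
  rfl

lemma good_step (ρ : Representation k (Gr n) M) (j : Fin n) (d : ℕ)
    (h : Good ρ (j.val + 1) d) : Good ρ j.val (d + 1) := by
  obtain ⟨hz, π, hs, hk, hT⟩ := h
  have hS := SC_exact ρ j
  refine ⟨?_, ?_⟩
  · intro e
    have hex := groupCohomology.mapShortComplex₁_exact hS (i := d + e + 1) (j := d + e + 1 + 1) rfl
    have : d + 1 + e + 1 = d + e + 1 + 1 := by omega
    rw [this]
    exact hex.isZero_X₂ ((hz e).eq_of_src _ _) ((hz (e + 1)).eq_of_tgt _ _)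
  · have hepi := groupCohomology.epi_δ_of_isZero hS d (hz 0)
    rw [ModuleCat.epi_iff_surjective] at hepi
    refine ⟨(groupCohomology.δ hS d (d + 1) rfl).hom.toAddMonoidHom.comp π,
      hepi.comp hs, ?_, ?_⟩
    · ext m
      have hex := groupCohomology.mapShortComplex₃_exact hS (i := d) (j := d + 1) rfl
      rw [ShortComplex.moduleCat_exact_iff] at hex
      have hzero := (groupCohomology.mapShortComplex₃ hS (i := d) (j := d + 1) rfl).zero
      have hD : ∀ y, (groupCohomology.map (A := FR ρ (j.val + 1)) (B := FR ρ (j.val + 1)) (MonoidHom.id (Gr n)) (D ρ (j.val + 1) j) d).hom y = 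
          (groupCohomology.map (A := FR ρ (j.val + 1)) (B := FR ρ (j.val + 1)) (MonoidHom.id (Gr n)) (T ρ (j.val + 1) j) d).hom y - y := by
        intro y; rw [map_D]; rfl
      rw [K_succ, ← hk]
      constructor
      · intro hm
        obtain ⟨y, hy⟩ := hex (π m) hm
        obtain ⟨m', rfl⟩ := hs y
        refine ⟨m', ?_⟩
        have hy' : (groupCohomology.map (A := FR ρ (j.val + 1)) (B := FR ρ (j.val + 1)) (MonoidHom.id (Gr n)) (D ρ (j.val + 1) j) d).hom (π m') = 
          π m := hy
        rw [hD, ← hT] at hy'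
        rw [AddMonoidHom.mem_ker, map_sub, map_sub, hy', sub_self]
      · rintro ⟨m', hm'⟩
        rw [AddMonoidHom.mem_ker, map_sub, map_sub, sub_eq_zero, hT, ← hD] at hm'
        change (groupCohomology.δ hS d (d + 1) rfl).hom (π m) = 0
        rw [hm']
        exact LinearMap.congr_fun (congrArg ModuleCat.Hom.hom hzero) (π m')
    · intro i m
      have hn := groupCohomology.δ_naturality hS hS (SCshift ρ j i) d (d + 1) rfl
      have := LinearMap.congr_fun (congrArg ModuleCat.Hom.hom hn) (π m)
      change (groupCohomology.δ hS d (d + 1) rfl).hom (π _) = _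
      rw [hT]
      exact this.symm

lemma good_all (ρ : Representation k (Gr n) M) (d : ℕ) : ∀ j, j + d = n → Good ρ j d := by
  induction d with
  | zero => 
    rintro j rfl
    exact good_top ρ
  | succ d ih =>
    intro j hj
    exact good_step ρ ⟨j, by omega⟩ d (ih (j + 1) (by omega))

lemma K_zero (ρ : Representation k (Gr n) M) :
    K ρ 0 = AddSubgroup.closure {x : M | ∃ (m : M) (γ : Gr n), x = m - ρ γ m} := by
  apply le_antisymm
  · apply AddSubgroup.closure_mono
    rintro x ⟨i, _, m, rfl⟩
    exact ⟨m, _, rfl⟩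
  · rw [AddSubgroup.closure_le]
    rintro x ⟨m, γ, rfl⟩
    let S : Subgroup (Gr n) :=
      { carrier := {γ | ∀ m, m - ρ γ m ∈ K ρ 0}
        one_mem' := by intro m; simp
        mul_mem' := by
          intro a b ha hb m
          convert add_mem (ha (ρ b m)) (hb m) using 1
          rw [map_mul, Module.End.mul_apply]
          abel
        inv_mem' := by
          intro a ha m
          convert neg_mem (ha (ρ a⁻¹ m)) using 1
          simp }
    have hg : ∀ i, gen i ∈ S := by
      intro i
      rw [← inv_mem_iff]
      intro m
      exact AddSubgroup.subset_closure ⟨i, Nat.zero_le _, m, rfl⟩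
    have : γ = ∏ i, gen i ^ (γ.toAdd i) := by
      apply Multiplicative.toAdd.injective
      funext l
      simp [gen, toAdd_prod, Finset.sum_apply, Pi.single_apply]
    have hγ : γ ∈ S := by
      rw [this]
      exact Subgroup.prod_mem _ fun i _ => Subgroup.zpow_mem _ (hg i) _
    exact hγ m

/-- Constant functions. -/
def constEquiv (ρ : Representation k (Gr n) M) : (act ρ 0).Equiv ρ :=
  .mk
    { toFun := fun f => f.1 0
      invFun := fun m => ⟨fun _ => m, fun _ _ _ => rfl⟩
      map_add' := fun _ _ => rfl
      map_smul' := fun _ _ => rfl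
      left_inv := fun f => Subtype.ext (funext fun x => f.2 _ _ (by simp))
      right_inv := fun _ => rfl } (by
    intro g
    ext f
    change ρ g (f.1 (0 + g.toAdd)) = ρ g (f.1 0)
    rw [f.2 (0 + g.toAdd) 0 (by simp)])

theorem main (ρ : Representation k (Gr n) M) :
    Nonempty ((groupCohomology (Rep.of ρ) n) ≃+
      (M ⧸ AddSubgroup.closure {x : M | ∃ (m : M) (γ : Gr n), x = m - ρ γ m})) := by
  obtain ⟨_, π, hs, hk, _⟩ := good_all ρ n 0 (zero_add n)
  rw [← K_zero, ← hk]
  have e1 := QuotientAddGroup.quotientKerEquivOfSurjective π hs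
  have e2 : groupCohomology (FR ρ 0) n ≅ groupCohomology (Rep.of ρ) n :=
    (groupCohomology.functor k (Gr n) n).mapIso (Rep.mkIso (constEquiv ρ))
  exact ⟨e2.symm.toLinearEquiv.toAddEquiv.trans e1.symm⟩

end Basic

end TopDeg

/-- For an abelian group `M` equipped with an action of `ℤⁿ` by group
automorphisms (formalized as a `ℤ`-linear representation `ρ` of the free abelian group
`ℤⁿ`, written multiplicatively), the `n`-th group cohomology `Hⁿ(ℤⁿ, M)` is isomorphic,
as an abelian group, to the coinvariants `M_{ℤⁿ}`, i.e. the quotient of `M` by the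
subgroup generated by all elements `m - γ • m`. -/
theorem groupCohomology_top_degree_isom_coinvariants (n : ℕ) (M : Type) [AddCommGroup M]
    [Module ℤ M] (ρ : Representation ℤ (Multiplicative (Fin n → ℤ)) M) :
    Nonempty ((groupCohomology (Rep.of ρ) n) ≃+
      (M ⧸ AddSubgroup.closure {x : M | ∃ (m : M) (γ : Multiplicative (Fin n → ℤ)),
        x = m - ρ γ m})) := by
  exact TopDeg.main ρ
end

section
/- Let n be a natural number and let M be an abelian group equipped with an action of the free abelian group ℤⁿ by group automorphisms. Then for every k > n the group cohomology H^k(ℤⁿ, M) is the trivial group. -/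
open CategoryTheory

namespace ZnVanishing

/-- Any function on `ℤ` is the discrete derivative of another one. -/
lemma exists_antidiff {M : Type*} [AddCommGroup M] (W : ℤ → M) :
    ∃ U : ℤ → M, ∀ m, U (m + 1) = U m + W m := by
  refine ⟨fun m => ∑ i ∈ Finset.range m.toNat, W i
    - ∑ i ∈ Finset.range (-m).toNat, W (-(i : ℤ) - 1), fun m => ?_⟩
  rcases m with m | m
  · have h1 : (Int.ofNat m + 1).toNat = m + 1 := by simp
    have h2 : (-(Int.ofNat m + 1)).toNat = 0 := by omega
    have h3 : (Int.ofNat m).toNat = m := by simp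
    have h4 : (-(Int.ofNat m)).toNat = 0 := by simp
    simp only [h1, h2, h3, h4, Finset.sum_range_succ]
    simp
  · have h1 : (Int.negSucc m + 1).toNat = 0 := by omega
    have h2 : (-(Int.negSucc m + 1)).toNat = m := by omega
    have h3 : (Int.negSucc m).toNat = 0 := by omega
    have h4 : (-(Int.negSucc m)).toNat = m + 1 := by omega
    have h5 : (Int.negSucc m) = -(m : ℤ) - 1 := by omega
    simp only [h1, h2, h3, h4, Finset.sum_range_succ]
    rw [h5]
    simp

section Seq

variable {R : Type} [CommRing R] {G : Type} [CommGroup G] (S : Subgroup G) (t : G)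
  {M : Type} [AddCommGroup M] [Module R M] (ρ : Representation R G M)

/-- `a ↦ (g ↦ g a)`. -/
def unitMap : ρ.IntertwiningMap
    (Representation.coind S.subtype (ρ.comp S.subtype)) where
  toFun a := ⟨fun g => ρ g a, fun s g => by simp⟩
  map_add' a b := by ext g; simp
  map_smul' c a := by ext g; simp
  isIntertwining' h := by
    ext a g
    change ρ g (ρ h a) = ρ (g * h) a
    simp

/-- `f ↦ (g ↦ f (t g) - t f(g))`. -/
def diffMap : (Representation.coind S.subtype (ρ.comp S.subtype)).IntertwiningMap
    (Representation.coind S.subtype (ρ.comp S.subtype)) where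
  toFun f := ⟨fun g => f.1 (t * g) - ρ t (f.1 g), fun s g => by
    have h1 := f.2 s g
    have h2 := f.2 s (t * g)
    simp only [Subgroup.coe_subtype, MonoidHom.comp_apply] at h1 h2
    simp only [Subgroup.coe_subtype, MonoidHom.comp_apply, map_sub]
    rw [mul_left_comm, h1, h2, ← Module.End.mul_apply, ← Module.End.mul_apply, ← map_mul,
      ← map_mul, mul_comm t (s : G)]⟩
  map_add' a b := by ext g; simp; abel
  map_smul' c a := by ext g; simp [smul_sub]
  isIntertwining' h := by
    ext a g
    change a.1 (t * g * h) - ρ t (a.1 (g * h)) = a.1 (t * (g * h)) - ρ t (a.1 (g * h))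
    rw [mul_assoc]

lemma unitMap_apply (a : M) (g : G) : (unitMap S ρ a).1 g = ρ g a := rfl

lemma diffMap_apply (f) (g : G) :
    (diffMap S t ρ f).1 g = f.1 (t * g) - ρ t (f.1 g) := rfl

lemma unitMap_injective : Function.Injective (unitMap S ρ) := fun a b h => by
  have := congrArg (fun f => f.1 1) h
  simpa [unitMap_apply] using this

lemma diffMap_unitMap (a : M) : diffMap S t ρ (unitMap S ρ a) = 0 := by
  ext g
  rw [diffMap_apply, unitMap_apply, unitMap_apply]
  simp

variable (χ : G →* Multiplicative ℤ) (ht : χ t = Multiplicative.ofAdd 1)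

include ht in
lemma exact_mid (f) (hf : diffMap χ.ker t ρ f = 0) : ∃ a, unitMap χ.ker ρ a = f := by
  have hf' : ∀ g, f.1 (t * g) = ρ t (f.1 g) := fun g => by
    have := congrArg (fun f => f.1 g) hf
    simp only [diffMap_apply] at this
    exact sub_eq_zero.1 this
  have hz : ∀ m : ℤ, f.1 (t ^ m) = ρ (t ^ m) (f.1 1) := by
    intro m
    induction m with
    | zero => simp
    | succ i ih => rw [add_comm, zpow_add, zpow_one, hf', ih]; simp
    | pred i ih =>
      have h := hf' (t ^ (-(i : ℤ) - 1))
      rw [← zpow_one_add, add_sub_cancel, ih] at h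
      have h2 := congrArg (ρ t⁻¹) h
      rw [← Module.End.mul_apply, ← Module.End.mul_apply, ← map_mul, ← map_mul] at h2
      simp only [inv_mul_cancel, map_one, Module.End.one_apply] at h2
      rw [← h2, sub_eq_add_neg, add_comm, zpow_add, zpow_neg_one]
  refine ⟨f.1 1, ?_⟩
  ext g
  rw [unitMap_apply]
  have hs : g * (t ^ (χ g).toAdd)⁻¹ ∈ χ.ker := by
    rw [MonoidHom.mem_ker, map_mul, map_inv, map_zpow, ht, ← ofAdd_zsmul]
    simp
  have h := f.2 ⟨_, hs⟩ (t ^ (χ g).toAdd)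
  simp only [Subgroup.coe_subtype, MonoidHom.comp_apply, inv_mul_cancel_right] at h
  rw [h, hz, ← Module.End.mul_apply, ← map_mul, inv_mul_cancel_right]

include ht in
lemma diffMap_surjective : Function.Surjective (diffMap χ.ker t ρ) := by
  intro h
  obtain ⟨U, hU⟩ := exists_antidiff (fun m : ℤ => ρ (t⁻¹) (ρ (t ^ m)⁻¹ (h.1 (t ^ m))))
  refine ⟨⟨fun g => ρ g (U (χ g).toAdd), fun s g => ?_⟩, ?_⟩
  · have : χ s = 1 := s.2
    simp [this]
  · ext g
    rw [diffMap_apply]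
    have hs : g * (t ^ (χ g).toAdd)⁻¹ ∈ χ.ker := by
      rw [MonoidHom.mem_ker, map_mul, map_inv, map_zpow, ht, ← ofAdd_zsmul]
      simp
    have h1 := h.2 ⟨_, hs⟩ (t ^ (χ g).toAdd)
    simp only [Subgroup.coe_subtype, MonoidHom.comp_apply, inv_mul_cancel_right] at h1
    have h2 : (χ (t * g)).toAdd = (χ g).toAdd + 1 := by simp [ht, add_comm]
    simp only [h2, hU, map_add]
    rw [h1]
    simp only [← Module.End.mul_apply, ← map_mul]
    rw [add_sub_cancel_left]
    congr 2
    rw [mul_comm t g]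
    group

/-- The short complex `A ⟶ Coind Res A ⟶ Coind Res A`. -/
noncomputable def seq : ShortComplex (Rep.{0} R G) where
  X₁ := Rep.of ρ
  X₂ := Rep.coind S.subtype (Rep.of (ρ.comp S.subtype))
  X₃ := Rep.coind S.subtype (Rep.of (ρ.comp S.subtype))
  f := Rep.ofHom (unitMap S ρ)
  g := Rep.ofHom (diffMap S t ρ)
  zero := by
    apply Rep.hom_ext
    apply Representation.IntertwiningMap.ext
    apply LinearMap.ext
    intro a
    exact diffMap_unitMap S t ρ a

include ht in
lemma seq_shortExact : (seq χ.ker t ρ).ShortExact where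
  exact := (forget₂ (Rep.{0} R G) (ModuleCat R)).reflects_exact_of_faithful _ <|
    (ShortComplex.moduleCat_exact_iff _).2 fun x hx => exact_mid t ρ χ ht x hx
  mono_f := (Rep.mono_iff_injective _).2 (unitMap_injective _ ρ)
  epi_g := (Rep.epi_iff_surjective _).2 (diffMap_surjective t ρ χ ht)

include ht in
lemma step (n : ℕ) (ih : ∀ (A : Rep.{0} R χ.ker) (k : ℕ), n < k →
    Limits.IsZero (groupCohomology A k)) (k : ℕ) (hk : n + 1 < k) :
    Limits.IsZero (groupCohomology (Rep.of ρ) k) := by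
  obtain ⟨k, rfl⟩ : ∃ j, k = j + 1 := ⟨k - 1, by omega⟩
  have hX := seq_shortExact t ρ χ ht
  have hz : ∀ j, n < j → Limits.IsZero (groupCohomology
      (Rep.coind χ.ker.subtype (Rep.of (ρ.comp χ.ker.subtype))) j) := fun j hj =>
    (ih _ j hj).of_iso (groupCohomology.coindIso _ j)
  have : IsIso (groupCohomology.δ hX k (k + 1) rfl) :=
    groupCohomology.isIso_δ_of_isZero hX k (hz k (by omega)) (hz (k + 1) (by omega))
  exact (hz k (by omega)).of_iso (asIso (groupCohomology.δ hX k (k + 1) rfl)).symm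

end Seq

theorem main (R : Type) [CommRing R] (n : ℕ) : ∀ (G : Type) [CommGroup G] (_ : G ≃* Multiplicative (Fin n → ℤ))
    (A : Rep.{0} R G) (k : ℕ), n < k → Limits.IsZero (groupCohomology A k) := by
  induction n with
  | zero =>
    intro G _ e A k hk
    obtain ⟨k, rfl⟩ : ∃ j, k = j + 1 := ⟨k - 1, by omega⟩
    have : Subsingleton (Multiplicative (Fin 0 → ℤ)) :=
      inferInstanceAs (Subsingleton (Fin 0 → ℤ))
    have : Subsingleton G := e.toEquiv.subsingleton
    exact isZero_groupCohomology_succ_of_subsingleton A k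
  | succ n ih =>
    intro G _ e A k hk
    let χ : G →* Multiplicative ℤ :=
      (AddMonoidHom.toMultiplicative (Pi.evalAddMonoidHom (fun _ : Fin (n + 1) => ℤ) 0)).comp
        e.toMonoidHom
    have hχ : ∀ g, (χ g).toAdd = (e g).toAdd 0 := fun g => rfl
    let t : G := e.symm (Multiplicative.ofAdd (Pi.single 0 1))
    have ht : χ t = Multiplicative.ofAdd 1 := by
      apply Multiplicative.toAdd.injective
      rw [hχ]
      simp [t]
    let e' : χ.ker ≃* Multiplicative (Fin n → ℤ) :=
      { toFun := fun g => Multiplicative.ofAdd (fun i => (e g.1).toAdd i.succ)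
        invFun := fun v => ⟨e.symm (Multiplicative.ofAdd (Fin.cons 0 v.toAdd)), by
          rw [MonoidHom.mem_ker]
          apply Multiplicative.toAdd.injective
          rw [hχ]
          simp⟩
        left_inv := fun g => by
          apply Subtype.ext
          apply e.injective
          apply Multiplicative.toAdd.injective
          funext i
          have h0 : (e g.1).toAdd 0 = 0 := by
            rw [← hχ]
            have : χ g.1 = 1 := g.2
            rw [this]; rfl
          refine Fin.cases ?_ (fun i => ?_) i
          · simp [h0]
          · simp
        right_inv := fun v => by
          apply Multiplicative.toAdd.injective
          funext i
          simp
        map_mul' := fun a b => by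
          apply Multiplicative.toAdd.injective
          funext i
          simp }
    exact step t A.ρ χ ht n (ih χ.ker e') k hk

end ZnVanishing


/-- For an abelian group `M` equipped with an action of `ℤⁿ` by group
automorphisms (formalized as a `ℤ`-linear representation of the free abelian group `ℤⁿ`,
written multiplicatively), the group cohomology `H^k(ℤⁿ, M)` vanishes for every `k > n`. -/
theorem groupCohomology_zn_vanishes_above_rank (n : ℕ) (M : Type) [AddCommGroup M]
    [Module ℤ M] (ρ : Representation ℤ (Multiplicative (Fin n → ℤ)) M)
    (k : ℕ) (hk : n < k) :
    Subsingleton (groupCohomology (Rep.of ρ) k) := by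
  exact ModuleCat.subsingleton_of_isZero (ZnVanishing.main ℤ n _ (MulEquiv.refl _) (Rep.of ρ) k hk)
end

section
/- Let k and l be integers and let ℤ² act on the abelian group ℤ² so that the first standard generator acts by (x, y) ↦ (x + k·y, y) and the second standard generator acts by (x, y) ↦ (x + l·y, y) (i.e., in the standard basis the generators act by the matrices [[1,k],[0,1]] and [[1,l],[0,1]]). Then the coinvariants (ℤ²)_{ℤ²} of this action are isomorphic to ℤ/gcd(k,l)ℤ × ℤ, via an isomorphism sending the class of (1,0) to the residue class of 1 in ℤ/gcd(k,l)ℤ and the class of (0,1) to the generator 1 of the ℤ-factor. -/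
/-- Let `k, l : ℤ` and let `ℤ²` act on `ℤ²` so that the first standard
generator acts by `(x, y) ↦ (x + k·y, y)` and the second by `(x, y) ↦ (x + l·y, y)`.
Then the coinvariants `(ℤ²)_{ℤ²}` are isomorphic to `ℤ/gcd(k,l)ℤ × ℤ`, via an isomorphism
sending the class of `(1,0)` to `(1, 0)` and the class of `(0,1)` to `(0, 1)`.
(Here `ZMod 0 = ℤ`, so the case `gcd(k,l) = 0` is covered.) -/
theorem coinvariants_unipotent_action (k l : ℤ)
    (ρ : Representation ℤ (Multiplicative (ℤ × ℤ)) (ℤ × ℤ))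
    (h1 : ∀ v : ℤ × ℤ, ρ (Multiplicative.ofAdd ((1 : ℤ), (0 : ℤ))) v = (v.1 + k * v.2, v.2))
    (h2 : ∀ v : ℤ × ℤ, ρ (Multiplicative.ofAdd ((0 : ℤ), (1 : ℤ))) v = (v.1 + l * v.2, v.2)) :
    ∃ e : ((ℤ × ℤ) ⧸ AddSubgroup.closure {x : ℤ × ℤ |
        ∃ (m : ℤ × ℤ) (γ : Multiplicative (ℤ × ℤ)), x = m - ρ γ m}) ≃+
        (ZMod (Int.gcd k l) × ℤ),
      e (QuotientAddGroup.mk ((1 : ℤ), (0 : ℤ))) = ((1 : ZMod (Int.gcd k l)), (0 : ℤ)) ∧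
      e (QuotientAddGroup.mk ((0 : ℤ), (1 : ℤ))) = ((0 : ZMod (Int.gcd k l)), (1 : ℤ)) := by
  classical
  let f : (ℤ × ℤ) →+ (ZMod (Int.gcd k l) × ℤ) :=
    AddMonoidHom.prodMap (Int.castAddHom (ZMod (Int.gcd k l))) (AddMonoidHom.id ℤ)
  have hf : ∀ v : ℤ × ℤ, f v = ((v.1 : ZMod (Int.gcd k l)), v.2) := fun v => rfl
  have hsurj : Function.Surjective f := by
    rintro ⟨a, b⟩
    obtain ⟨x, rfl⟩ := ZMod.intCast_surjective a
    exact ⟨(x, b), rfl⟩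
  have hk : ((k : ℤ) : ZMod (Int.gcd k l)) = 0 :=
    (ZMod.intCast_zmod_eq_zero_iff_dvd _ _).2 (Int.gcd_dvd_left k l)
  have hl : ((l : ℤ) : ZMod (Int.gcd k l)) = 0 :=
    (ZMod.intCast_zmod_eq_zero_iff_dvd _ _).2 (Int.gcd_dvd_right k l)
  -- the subgroup of elements preserving `f`
  let S : Subgroup (Multiplicative (ℤ × ℤ)) :=
    { carrier := {γ | ∀ m, f (ρ γ m) = f m}
      one_mem' := by intro m; simp
      mul_mem' := by
        intro a b ha hb m
        rw [map_mul, Module.End.mul_apply, ha, hb]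
      inv_mem' := by
        intro a ha m
        rw [← ha (ρ a⁻¹ m), ← Module.End.mul_apply, ← map_mul]
        simp }
  have hS1 : Multiplicative.ofAdd ((1 : ℤ), (0 : ℤ)) ∈ S := by
    intro m
    rw [h1, hf, hf]
    simp [hk]
  have hS2 : Multiplicative.ofAdd ((0 : ℤ), (1 : ℤ)) ∈ S := by
    intro m
    rw [h2, hf, hf]
    simp [hl]
  have hS : ∀ γ : Multiplicative (ℤ × ℤ), ∀ m, f (ρ γ m) = f m := by
    intro γ
    have hγ : γ = Multiplicative.ofAdd ((1 : ℤ), (0 : ℤ)) ^ (Multiplicative.toAdd γ).1 *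
        Multiplicative.ofAdd ((0 : ℤ), (1 : ℤ)) ^ (Multiplicative.toAdd γ).2 := by
      apply Multiplicative.toAdd.injective
      ext <;> simp
    have : γ ∈ S := by
      rw [hγ]
      exact S.mul_mem (S.zpow_mem hS1 _) (S.zpow_mem hS2 _)
    exact this
  have hker : AddSubgroup.closure {x : ℤ × ℤ |
        ∃ (m : ℤ × ℤ) (γ : Multiplicative (ℤ × ℤ)), x = m - ρ γ m} = f.ker := by
    apply le_antisymm
    · rw [AddSubgroup.closure_le]
      rintro x ⟨m, γ, rfl⟩
      change f (m - ρ γ m) = 0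
      rw [map_sub, hS, sub_self]
    · rintro ⟨x, y⟩ hx
      have hx' : ((x : ZMod (Int.gcd k l)), y) = 0 := hx
      obtain ⟨hx1, rfl⟩ := Prod.mk.inj hx'
      obtain ⟨c, hc⟩ := (ZMod.intCast_zmod_eq_zero_iff_dvd _ _).1 hx1
      have e1 : ((-k, 0) : ℤ × ℤ) ∈ AddSubgroup.closure {x : ℤ × ℤ |
          ∃ (m : ℤ × ℤ) (γ : Multiplicative (ℤ × ℤ)), x = m - ρ γ m} :=
        AddSubgroup.subset_closure ⟨(0, 1), Multiplicative.ofAdd (1, 0), by rw [h1]; simp⟩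
      have e2 : ((-l, 0) : ℤ × ℤ) ∈ AddSubgroup.closure {x : ℤ × ℤ |
          ∃ (m : ℤ × ℤ) (γ : Multiplicative (ℤ × ℤ)), x = m - ρ γ m} :=
        AddSubgroup.subset_closure ⟨(0, 1), Multiplicative.ofAdd (0, 1), by rw [h2]; simp⟩
      have e3 := AddSubgroup.add_mem _
        (AddSubgroup.zsmul_mem _ e1 (-(Int.gcdA k l * c)))
        (AddSubgroup.zsmul_mem _ e2 (-(Int.gcdB k l * c)))
      convert e3 using 1
      ext
      · rw [hc, Int.gcd_eq_gcd_ab]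
        simp
        ring
      · simp
  refine ⟨(QuotientAddGroup.quotientAddEquivOfEq hker).trans
    (QuotientAddGroup.quotientKerEquivOfSurjective f hsurj), ?_, ?_⟩
  · change f (1, 0) = _
    rw [hf]; simp
  · change f (0, 1) = _
    rw [hf]; simp
end
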